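/- Let v¹ and v² be infinite words over {0,1} with v¹ amicable with v² (v¹ ∝ v²), and let Γ denote the shift Γ(u_0 u_1 u_2 ⋯) = u_1 u_2 u_3 ⋯. Then for every i ∈ ℕ, at least one of the following holds: Γ^i(v¹) ∝ Γ^i(v²), or Γ^{i+1}(v¹) ∝ Γ^{i+1}(v²). -/

import Mathlib

/-!
The blocks `σ01(a)` and `σ10(a)` of a letter `a` have the same length, which is 1 or 2. Deleting
the first letter of a ternarization therefore deletes one or two letters from both words at once
and leaves an amicable pair. So the positions at which both words can be cut simultaneously have
gaps at most 2, and one of any two consecutive positions is such a cut.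
-/

/-- The alphabet of 3iet words. -/
inductive L3 | A | B | C
deriving DecidableEq, Inhabited

/-- The three-interval exchange transformation `T_{ε,ℓ}`. -/
noncomputable def T3 (ε ℓ : ℝ) (x : ℝ) : ℝ :=
  if x < ℓ - 1 + ε then x + 1 - ε
  else if x < ε then x + 1 - 2*ε
  else x - ε

/-- The 3iet word `u_{ε,ℓ,x0}` coding the orbit of `x0` under `T_{ε,ℓ}`. -/
noncomputable def u3 (ε ℓ x0 : ℝ) (n : ℕ) : L3 :=
  if (T3 ε ℓ)^[n] x0 < ℓ - 1 + ε then L3.A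
  else if (T3 ε ℓ)^[n] x0 < ε then L3.B
  else L3.C

/-- The two-interval exchange transformation `T_ε`. -/
noncomputable def T2 (ε : ℝ) (x : ℝ) : ℝ := if x < ε then x + 1 - ε else x - ε

/-- The Sturmian word `u_{ε,x0}` of slope `ε` coding the orbit of `x0` under `T_ε`
(letter `0` is `false`, letter `1` is `true`). -/
noncomputable def u2 (ε x0 : ℝ) (n : ℕ) : Bool := if (T2 ε)^[n] x0 < ε then false else true

/-- `w` is a factor of the infinite word `u`. -/
def IsFactor {α : Type*} (w : List α) (u : ℕ → α) : Prop :=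
  ∃ i : ℕ, w = (List.range w.length).map fun j => u (i + j)

/-- The prefix of length `m` of the periodic infinite word `www⋯`;
for `|w| ≤ m` this is the fractional power `w^{m/|w|}`. -/
def powPrefix {α : Type*} [Inhabited α] (w : List α) (m : ℕ) : List α :=
  (List.range m).map fun j => w.getD (j % w.length) default

/-- The index of the factor `w` in the infinite word `u`:
`sup {r ∈ ℚ, r ≥ 1, r|w| ∈ ℕ | w^r is a factor of u}`, as an element of `ℝ ∪ {+∞}`. -/
noncomputable def factorIndex {α : Type*} [Inhabited α] (u : ℕ → α) (w : List α) : EReal :=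
  sSup {x : EReal | ∃ m : ℕ, w.length ≤ m ∧ IsFactor (powPrefix w m) u ∧
    x = (((m : ℝ) / (w.length : ℝ) : ℝ) : EReal)}

/-- The index of the infinite word `u`: `sup {ind(w) | w a nonempty factor of u}`. -/
noncomputable def wordIndex {α : Type*} [Inhabited α] (u : ℕ → α) : EReal :=
  sSup {x : EReal | ∃ w : List α, w ≠ [] ∧ IsFactor w u ∧ x = factorIndex u w}

/-- The Gauss map `x ↦ {1/x}`. -/
noncomputable def gaussMap (x : ℝ) : ℝ := Int.fract x⁻¹

/-- `cfa ε n` is the partial quotient `a_{n+1}` of the continued fraction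
expansion `ε = [0; a₁, a₂, a₃, …]` of the irrational `ε ∈ (0,1)`. -/
noncomputable def cfa (ε : ℝ) (n : ℕ) : ℕ := ⌊(gaussMap^[n] ε)⁻¹⌋₊

/-- The morphism `σ01 : A ↦ 0, B ↦ 01, C ↦ 1`. -/
def sigma01 : L3 → List Bool
  | L3.A => [false]
  | L3.B => [false, true]
  | L3.C => [true]

/-- The morphism `σ10 : A ↦ 0, B ↦ 10, C ↦ 1`. -/
def sigma10 : L3 → List Bool
  | L3.A => [false]
  | L3.B => [true, false]
  | L3.C => [true]

/-- The image `φ(u₀)φ(u₁)φ(u₂)⋯` of an infinite word `u` under a (nonerasing) morphism `φ`. -/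
def morphWord (φ : L3 → List Bool) (u : ℕ → L3) (m : ℕ) : Bool :=
  ((List.range (m+1)).flatMap fun k => φ (u k)).getD m false

/-- `u` is a uniformly recurrent infinite word: every factor occurs infinitely often
with bounded gaps (every window of some length `R` contains an occurrence). -/
def UniformlyRecurrent {α : Type*} (u : ℕ → α) : Prop :=
  ∀ w : List α, IsFactor w u → ∃ R : ℕ, ∀ i : ℕ, ∃ j : ℕ, i ≤ j ∧ j < i + R ∧
    w = (List.range w.length).map fun t => u (j + t)

/-- `u` is eventually periodic. -/
def EventuallyPeriodic {α : Type*} (u : ℕ → α) : Prop :=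
  ∃ N p : ℕ, 0 < p ∧ ∀ n : ℕ, N ≤ n → u (n + p) = u n

/-- The standard words of `ε = [0; a₁, a₂, …]`, with the index shifted by one:
`sw ε 0 = s₋₁ = 1`, `sw ε 1 = s₀ = 0`, `sw ε 2 = s₁ = s₀^{a₁-1} s₋₁`, and
`sw ε (n+3) = s_{n+2} = s_{n+1}^{a_{n+2}} s_n`. -/
noncomputable def sw (ε : ℝ) : ℕ → List Bool
  | 0 => [true]
  | 1 => [false]
  | 2 => (List.replicate (cfa ε 0 - 1) ([false] : List Bool)).flatten ++ [true]
  | (n+3) => (List.replicate (cfa ε (n+1)) (sw ε (n+2))).flatten ++ sw ε (n+1)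

/-- Denominators of the convergents of `ε`, shifted by one: `qq ε 0 = q₋₁ = 0`,
`qq ε 1 = q₀ = 1`, and `qq ε (n+2) = q_{n+1} = a_{n+1} q_n + q_{n-1}`. -/
noncomputable def qq (ε : ℝ) : ℕ → ℕ
  | 0 => 0
  | 1 => 1
  | (n+2) => cfa ε n * qq ε (n+1) + qq ε n

/-- `u` is a 3iet word. -/
def Is3ietWord (u : ℕ → L3) : Prop :=
  ∃ ε ℓ x0 : ℝ, Irrational ε ∧ 0 < ε ∧ ε < 1 ∧ max ε (1 - ε) < ℓ ∧ ℓ < 1 ∧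
    x0 ∈ Set.Ico 0 ℓ ∧ u = u3 ε ℓ x0

/-- `v` is a Sturmian word. -/
def IsSturmianWord (v : ℕ → Bool) : Prop :=
  ∃ ε x0 : ℝ, Irrational ε ∧ 0 < ε ∧ ε < 1 ∧ x0 ∈ Set.Ico (0:ℝ) 1 ∧ v = u2 ε x0

/-- The infinite binary word `v1` is amicable with `v2` (`v1 ∝ v2`). -/
def AmicableInf (v1 v2 : ℕ → Bool) : Prop :=
  ∃ w : ℕ → L3, v1 = morphWord sigma01 w ∧ v2 = morphWord sigma10 w

/-- The morphism `Φ_k : A ↦ 0, B ↦ 01^{k+1}, C ↦ 01^k`. -/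
def Phi (k : ℕ) : L3 → List Bool
  | L3.A => [false]
  | L3.B => false :: List.replicate (k+1) true
  | L3.C => false :: List.replicate k true

/-- The infinite word `B₀B₁B₂⋯` obtained by concatenating the sequence of
(nonempty) blocks `B`. -/
def concatOfBlocks (B : ℕ → List Bool) (m : ℕ) : Bool :=
  ((List.range (m+1)).flatMap B).getD m false

theorem le_length_flatMap_range {α : Type*} {B : ℕ → List α} (hB : ∀ k, B k ≠ []) (n : ℕ) :
    n ≤ ((List.range n).flatMap B).length := by
  have one_le : ∀ l ∈ (List.range n).map fun k => (B k).length, 1 ≤ l :=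
    List.forall_mem_map.mpr fun k _ => List.length_pos_iff.mpr (hB k)
  simpa only [List.length_flatMap, List.length_map, List.length_range] using
    List.length_le_sum_of_one_le _ one_le

theorem getD_flatMap_range {B : ℕ → List Bool} (hB : ∀ k, B k ≠ []) {m n : ℕ}
    (hmn : m < n) :
    ((List.range n).flatMap B).getD m false = concatOfBlocks B m := by
  obtain ⟨d, rfl⟩ := Nat.exists_eq_add_of_le (Nat.succ_le_of_lt hmn)
  rw [List.range_add, List.flatMap_append,
    List.getD_append _ _ _ _ (le_length_flatMap_range hB (m + 1)), concatOfBlocks]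

theorem concatOfBlocks_add_length {B : ℕ → List Bool} (hB : ∀ k, B k ≠ []) (m : ℕ) :
    concatOfBlocks B (m + (B 0).length) = concatOfBlocks (fun k => B (k + 1)) m := by
  have hpos : 0 < (B 0).length := List.length_pos_iff.mpr (hB 0)
  rw [concatOfBlocks, List.range_succ_eq_map, List.flatMap_cons,
    List.getD_append_right _ _ _ _ (Nat.le_add_left _ _), Nat.add_sub_cancel, List.flatMap_map]
  exact getD_flatMap_range (fun k => hB (k + 1)) (Nat.lt_add_of_pos_right hpos)

theorem morphWord_add_length {φ : L3 → List Bool} {u : ℕ → L3} (hφ : ∀ k, φ (u k) ≠ [])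
    (m : ℕ) :
    morphWord φ u (m + (φ (u 0)).length) = morphWord φ (fun k => u (k + 1)) m :=
  concatOfBlocks_add_length hφ m

theorem sigma01_ne_nil (a : L3) : sigma01 a ≠ [] := by
  cases a <;> exact List.cons_ne_nil _ _

theorem sigma10_ne_nil (a : L3) : sigma10 a ≠ [] := by
  cases a <;> exact List.cons_ne_nil _ _

theorem length_sigma10 (a : L3) : (sigma10 a).length = (sigma01 a).length := by
  cases a <;> rfl

theorem length_sigma01_eq_one_or_two (a : L3) :
    (sigma01 a).length = 1 ∨ (sigma01 a).length = 2 := by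
  cases a <;> decide

theorem amicableInf_morphWord_add_length (w : ℕ → L3) :
    AmicableInf (fun n => morphWord sigma01 w (n + (sigma01 (w 0)).length))
      (fun n => morphWord sigma10 w (n + (sigma01 (w 0)).length)) := by
  refine ⟨fun k => w (k + 1), funext fun n => ?_, funext fun n => ?_⟩
  · exact morphWord_add_length (fun k => sigma01_ne_nil (w k)) n
  · rw [← length_sigma10]
    exact morphWord_add_length (fun k => sigma10_ne_nil (w k)) n

theorem AmicableInf.shift_one_or_two {v1 v2 : ℕ → Bool} (h : AmicableInf v1 v2) :
    AmicableInf (fun n => v1 (n + 1)) (fun n => v2 (n + 1)) ∨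
      AmicableInf (fun n => v1 (n + 2)) (fun n => v2 (n + 2)) := by
  obtain ⟨w, rfl, rfl⟩ := h
  have h_shift := amicableInf_morphWord_add_length w
  rcases length_sigma01_eq_one_or_two (w 0) with h_one | h_two
  · exact Or.inl (h_one ▸ h_shift)
  · exact Or.inr (h_two ▸ h_shift)

/-- if `v¹ ∝ v²` then for every `i` either `Γ^i(v¹) ∝ Γ^i(v²)` or
`Γ^{i+1}(v¹) ∝ Γ^{i+1}(v²)`. -/
theorem amicable_shift (v1 v2 : ℕ → Bool) (h : AmicableInf v1 v2) (i : ℕ) :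
    AmicableInf (fun n => v1 (n + i)) (fun n => v2 (n + i)) ∨
      AmicableInf (fun n => v1 (n + (i+1))) (fun n => v2 (n + (i+1))) := by
  induction i with
  | zero => exact Or.inl h
  | succ i ih =>
    rcases ih with h_cut | h_cut
    · have h_next := h_cut.shift_one_or_two
      simp only [Nat.add_right_comm _ _ i] at h_next
      exact h_next
    · exact Or.inl h_cut
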